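/- Let n ≥ 1 and let C be a symmetric n×n real matrix. Define Sym(C⊗C⊗I)(μ₁,…,μ₆) = (1/6!) Σ_{σ ∈ S₆} C_{μ_{σ(1)}μ_{σ(2)}} C_{μ_{σ(3)}μ_{σ(4)}} δ_{μ_{σ(5)}μ_{σ(6)}}, where δ is the Kronecker delta. Then Σ_{i,j,k=1}^{n} Sym(C⊗C⊗I)(i,i,j,j,k,k) = ((n+4)/15) ( (tr C)² + 2 tr(C²) ). -/

import Mathlib

open Matrix

/-!
The symmetrized tensor `Sym(A ⊗ T)` is computed by choosing which two of the arguments are fed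
to `A` and symmetrizing `T` over the remaining ones. At `(i,i,j,j,k,k)` the two chosen arguments
either form one of the three equal pairs, or come from two different pairs, which happens in four
ways for each of the three choices of these pairs. Summation over `i, j, k` identifies the three
choices in each case, so only the contractions of `A i i * Sym T (j,j,k,k)` and of
`A i j * Sym T (i,j,k,k)` remain, and for `T = B ⊗ D` these are products of traces. The result for
`C ⊗ C ⊗ I` is the case `A = B = C`, `D = 1` of the formula for three symmetric matrices.
-/

open Equiv

/-- The unnormalized symmetrization of an `m`-index tensor: `m!` times its symmetric part. A tensor
is encoded as a function of its multi-index. -/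
def permSum {ι R : Type*} [AddCommMonoid R] {m : ℕ} (T : (Fin m → ι) → R) (v : Fin m → ι) : R :=
  ∑ σ : Perm (Fin m), T (v ∘ σ)

/-- The tensor product `A ⊗ T` of a matrix with an `m`-index tensor. The matrix takes the first two
indices, so that `A ⊗ B ⊗ D` is `outerProd A (outerProd B (outerProd D 1))`. -/
def outerProd {ι R : Type*} [Mul R] {m : ℕ} (A : Matrix ι ι R) (T : (Fin m → ι) → R)
    (w : Fin (m + 2) → ι) : R :=
  A (w 0) (w 1) * T (vecTail (vecTail w))

section PermSum

variable {ι R : Type*} {m : ℕ} [AddCommMonoid R]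

theorem permSum_comp_perm (T : (Fin m → ι) → R) (v : Fin m → ι) (ρ : Perm (Fin m)) :
    permSum T (v ∘ ρ) = permSum T v :=
  Fintype.sum_equiv (Equiv.mulLeft ρ) _ _ fun _ => rfl

theorem exists_vecTail_comp_swap_eq_removeNth_comp (v : Fin (m + 1) → ι) (a : Fin (m + 1)) :
    ∃ ρ : Perm (Fin m), vecTail (v ∘ swap 0 a) = a.removeNth v ∘ ρ := by
  cases a using Fin.cases with
  | zero => exact ⟨1, by ext; simp [vecTail, Fin.tail]⟩
  | succ b => exact ⟨b.cycleRange, by ext; simp [vecTail, Fin.removeNth_apply]⟩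

theorem permSum_succ (T : (Fin (m + 1) → ι) → R) (v : Fin (m + 1) → ι) :
    permSum T v = ∑ a, permSum (fun w => T (vecCons (v a) w)) (a.removeNth v) := by
  have split_head : permSum T v =
      ∑ a, permSum (fun w => T (vecCons (v a) w)) (vecTail (v ∘ swap 0 a)) := by
    simp only [permSum, ← Fintype.sum_prod_type']
    refine Fintype.sum_equiv Perm.decomposeFin _ _ fun σ => ?_
    obtain ⟨⟨a, τ⟩, rfl⟩ := Perm.decomposeFin.symm.surjective σ
    rw [apply_symm_apply]
    congr 1
    ext i
    cases i using Fin.cases <;> simp [vecTail]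
  rw [split_head]
  refine Fintype.sum_congr _ _ fun a => ?_
  obtain ⟨ρ, hρ⟩ := exists_vecTail_comp_swap_eq_removeNth_comp v a
  rw [hρ, permSum_comp_perm]

end PermSum

theorem removeNth_succ_vecCons {ι : Type*} {m : ℕ} (x : ι) (v : Fin (m + 1) → ι)
    (a : Fin (m + 1)) : a.succ.removeNth (vecCons x v) = vecCons x (a.removeNth v) := by
  ext i
  cases i using Fin.cases <;> simp [Fin.removeNth_apply]

section TripleSum

variable {ι R : Type*} [Fintype ι] [AddCommMonoid R]

theorem sum_sum_sum_swap_last (F : ι → ι → ι → R) :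
    ∑ i, ∑ j, ∑ k, F i k j = ∑ i, ∑ j, ∑ k, F i j k :=
  Fintype.sum_congr _ _ fun _ => Finset.sum_comm

theorem sum_sum_sum_rotate (F : ι → ι → ι → R) :
    ∑ i, ∑ j, ∑ k, F j k i = ∑ i, ∑ j, ∑ k, F i j k := by
  rw [← sum_sum_sum_swap_last F]
  exact Finset.sum_comm

end TripleSum

section Trace

variable {ι R : Type*} [Fintype ι] [NonUnitalNonAssocSemiring R]

theorem trace_mul_of_isSymm (A : Matrix ι ι R) {B : Matrix ι ι R} (hB : B.IsSymm) :
    (A * B).trace = ∑ i, ∑ j, A i j * B i j := by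
  simp only [trace, diag, mul_apply, hB.apply]

theorem trace_mul_mul_of_isSymm (A B : Matrix ι ι R) {D : Matrix ι ι R} (hD : D.IsSymm) :
    (A * B * D).trace = ∑ i, ∑ j, ∑ k, A i j * B j k * D i k := by
  rw [trace_mul_of_isSymm _ hD, ← sum_sum_sum_swap_last]
  simp only [mul_apply, Finset.sum_mul]

end Trace

theorem permSum_outerProd {ι R : Type*} [NonUnitalNonAssocSemiring R] {m : ℕ}
    (A : Matrix ι ι R) (T : (Fin m → ι) → R) (v : Fin (m + 2) → ι) :
    permSum (outerProd A T) v =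
      ∑ a, ∑ b, A (v a) (a.removeNth v b) * permSum T (b.removeNth (a.removeNth v)) := by
  simp only [permSum_succ (outerProd A T)]
  refine Fintype.sum_congr _ _ fun a => ?_
  rw [permSum_succ]
  refine Fintype.sum_congr _ _ fun b => ?_
  rw [permSum, permSum, Finset.mul_sum]
  rfl

section OuterProd

variable {ι R : Type*} [CommSemiring R]

theorem permSum_outerProd_two {D : Matrix ι ι R} (hD : D.IsSymm) (p q : ι) :
    permSum (outerProd D 1) ![p, q] = 2 * D p q := by
  -- `Fin.reduceSucc` would evaluate the `Fin.succ` that `removeNth_succ_vecCons` matches on.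
  simp only [permSum_outerProd, Fin.sum_univ_succ, removeNth_succ_vecCons, Fin.removeNth_zero,
    Fin.tail_vecCons, cons_val_zero, cons_val_succ, Finset.univ_eq_empty, Finset.sum_empty,
    -Fin.reduceSucc]
  simp [permSum, hD.apply p q, two_mul]

theorem permSum_outerProd_four {B D : Matrix ι ι R} (hB : B.IsSymm) (hD : D.IsSymm)
    (p q r s : ι) :
    permSum (outerProd B (outerProd D 1)) ![p, q, r, s] =
      4 * (B p q * D r s + B p r * D q s + B p s * D q r +
        B q r * D p s + B q s * D p r + B r s * D p q) := by
  simp only [permSum_outerProd B, Fin.sum_univ_succ, removeNth_succ_vecCons, Fin.removeNth_zero,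
    Fin.tail_vecCons, cons_val_zero, cons_val_succ, Finset.univ_eq_empty, Finset.sum_empty,
    permSum_outerProd_two hD, -Fin.reduceSucc]
  rw [hB.apply p q, hB.apply p r, hB.apply p s, hB.apply q r, hB.apply q s, hB.apply r s]
  ring

theorem permSum_outerProd_pairs {A : Matrix ι ι R} (hA : A.IsSymm) (T : (Fin 4 → ι) → R)
    (i j k : ι) :
    permSum (outerProd A T) ![i, i, j, j, k, k] =
      2 * (A i i * permSum T ![j, j, k, k] + A j j * permSum T ![i, i, k, k] +
        A k k * permSum T ![i, i, j, j]) +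
      8 * (A i j * permSum T ![i, j, k, k] + A i k * permSum T ![i, k, j, j] +
        A j k * permSum T ![j, k, i, i]) := by
  have swap_jk : ![i, k, j, j] = ![i, j, j, k] ∘ swap 1 3 := by
    ext x; fin_cases x <;> rfl
  have swap_i : ![j, k, i, i] = ![i, i, j, k] ∘ (swap 0 2 * swap 1 3 : Perm (Fin 4)) := by
    ext x; fin_cases x <;> rfl
  rw [swap_jk, swap_i, permSum_comp_perm, permSum_comp_perm]
  simp only [permSum_outerProd, Fin.sum_univ_succ, removeNth_succ_vecCons, Fin.removeNth_zero,
    Fin.tail_vecCons, cons_val_zero, cons_val_succ, Finset.univ_eq_empty, Finset.sum_empty,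
    -Fin.reduceSucc]
  rw [hA.apply i j, hA.apply i k, hA.apply j k]
  ring

variable [Fintype ι]

theorem sum_permSum_outerProd_pairs {A : Matrix ι ι R} (hA : A.IsSymm) (T : (Fin 4 → ι) → R) :
    ∑ i, ∑ j, ∑ k, permSum (outerProd A T) ![i, i, j, j, k, k] =
      6 * (A.trace * ∑ j, ∑ k, permSum T ![j, j, k, k]) +
      24 * ∑ i, ∑ j, ∑ k, A i j * permSum T ![i, j, k, k] := by
  let U (i j k : ι) : R := A i i * permSum T ![j, j, k, k]
  let W (i j k : ι) : R := A i j * permSum T ![i, j, k, k]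
  calc ∑ i, ∑ j, ∑ k, permSum (outerProd A T) ![i, i, j, j, k, k]
    _ = ∑ i, ∑ j, ∑ k, (2 * (U i j k + U j i k + U k i j) + 8 * (W i j k + W i k j + W j k i)) := by
      simp only [permSum_outerProd_pairs hA, U, W]
    _ = 2 * (∑ i, ∑ j, ∑ k, U i j k + ∑ i, ∑ j, ∑ k, U j i k + ∑ i, ∑ j, ∑ k, U k i j) +
        8 * (∑ i, ∑ j, ∑ k, W i j k + ∑ i, ∑ j, ∑ k, W i k j + ∑ i, ∑ j, ∑ k, W j k i) := by
      simp only [Finset.sum_add_distrib, ← Finset.mul_sum]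
    _ = 6 * (A.trace * ∑ j, ∑ k, permSum T ![j, j, k, k]) + 24 * ∑ i, ∑ j, ∑ k, W i j k := by
      have sum_U : ∑ i, ∑ j, ∑ k, U i j k = A.trace * ∑ j, ∑ k, permSum T ![j, j, k, k] := by
        simp only [U, ← Finset.mul_sum, ← Finset.sum_mul, trace, diag]
      rw [Finset.sum_comm (f := fun i j => ∑ k, U j i k),
        ← sum_sum_sum_rotate fun i j k => U k i j, sum_sum_sum_swap_last W,
        sum_sum_sum_rotate W, sum_U]
      ring

theorem sum_permSum_outerProd_outerProd {B D : Matrix ι ι R} (hB : B.IsSymm) (hD : D.IsSymm) :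
    ∑ j, ∑ k, permSum (outerProd B (outerProd D 1)) ![j, j, k, k] =
      8 * (B.trace * D.trace + 2 * (B * D).trace) := by
  have expand (j k : ι) : permSum (outerProd B (outerProd D 1)) ![j, j, k, k] =
      4 * (B j j * D k k + B k k * D j j + 4 * (B j k * D j k)) := by
    rw [permSum_outerProd_four hB hD]
    ring
  rw [trace_mul_of_isSymm B hD]
  simp only [expand, Finset.sum_add_distrib, ← Finset.mul_sum, ← Finset.sum_mul, trace, diag]
  ring

theorem sum_mul_permSum_outerProd_outerProd {A B D : Matrix ι ι R} (hA : A.IsSymm)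
    (hB : B.IsSymm) (hD : D.IsSymm) :
    ∑ i, ∑ j, ∑ k, A i j * permSum (outerProd B (outerProd D 1)) ![i, j, k, k] =
      4 * (B.trace * (A * D).trace + D.trace * (A * B).trace + 4 * (A * B * D).trace) := by
  have expand (i j k : ι) : A i j * permSum (outerProd B (outerProd D 1)) ![i, j, k, k] =
      4 * (A i j * D i j * B k k + A i j * B i j * D k k +
        2 * (A i j * B j k * D i k) + 2 * (A j i * B i k * D j k)) := by
    rw [permSum_outerProd_four hB hD, hA.apply i j]
    ring
  have sum_swapped : ∑ i, ∑ j, ∑ k, A j i * B i k * D j k =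
      ∑ i, ∑ j, ∑ k, A i j * B j k * D i k := Finset.sum_comm
  rw [trace_mul_of_isSymm A hB, trace_mul_of_isSymm A hD, trace_mul_mul_of_isSymm A B hD]
  simp only [expand, Finset.sum_add_distrib, ← Finset.mul_sum, ← Finset.sum_mul, sum_swapped,
    trace, diag]
  ring

theorem sum_permSum_outerProd_outerProd_outerProd {A B D : Matrix ι ι R} (hA : A.IsSymm)
    (hB : B.IsSymm) (hD : D.IsSymm) :
    ∑ i, ∑ j, ∑ k, permSum (outerProd A (outerProd B (outerProd D 1))) ![i, i, j, j, k, k] =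
      48 * (A.trace * B.trace * D.trace +
        2 * (A.trace * (B * D).trace + B.trace * (A * D).trace + D.trace * (A * B).trace) +
        8 * (A * B * D).trace) := by
  rw [sum_permSum_outerProd_pairs hA, sum_permSum_outerProd_outerProd hB hD,
    sum_mul_permSum_outerProd_outerProd hA hB hD]
  ring

end OuterProd

theorem contraction_sym_CC_delta_general {ι K : Type*} [Fintype ι] [Field K] [CharZero K]
    {A B D : Matrix ι ι K} (hA : A.IsSymm) (hB : B.IsSymm) (hD : D.IsSymm) :
    (∑ i, ∑ j, ∑ k, (1 / (Nat.factorial 6 : K)) * ∑ σ : Perm (Fin 6),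
        A (![i, i, j, j, k, k] (σ 0)) (![i, i, j, j, k, k] (σ 1))
          * B (![i, i, j, j, k, k] (σ 2)) (![i, i, j, j, k, k] (σ 3))
          * D (![i, i, j, j, k, k] (σ 4)) (![i, i, j, j, k, k] (σ 5)))
      = (A.trace * B.trace * D.trace +
        2 * (A.trace * (B * D).trace + B.trace * (A * D).trace + D.trace * (A * B).trace) +
        8 * (A * B * D).trace) / 15 := by
  have hpermSum (v : Fin 6 → ι) :
      ∑ σ : Perm (Fin 6), A (v (σ 0)) (v (σ 1)) * B (v (σ 2)) (v (σ 3)) * D (v (σ 4)) (v (σ 5)) =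
        permSum (outerProd A (outerProd B (outerProd D 1))) v := by
    refine Fintype.sum_congr _ _ fun σ => ?_
    simp only [outerProd, Pi.one_apply, mul_one, mul_assoc]
    rfl
  simp only [hpermSum, ← Finset.mul_sum, sum_permSum_outerProd_outerProd_outerProd hA hB hD]
  have factorial_six : (Nat.factorial 6 : K) = 720 := by norm_num [Nat.factorial]
  rw [factorial_six]
  ring

/-- **Contraction of the symmetrized product `C⊗C⊗I`.** With
`Sym(C⊗C⊗I)(μ₁,…,μ₆) = (1/6!) Σ_{σ ∈ S₆} C_{μ_{σ(1)}μ_{σ(2)}} C_{μ_{σ(3)}μ_{σ(4)}} δ_{μ_{σ(5)}μ_{σ(6)}}`,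
one has `Σ_{i,j,k} Sym(C⊗C⊗I)(i,i,j,j,k,k) = ((n+4)/15)((tr C)² + 2 tr(C²))`. -/
theorem contraction_sym_CC_delta
    (n : ℕ) (hn : 1 ≤ n)
    (C : Matrix (Fin n) (Fin n) ℝ) (hC : C.IsSymm) :
    (∑ i : Fin n, ∑ j : Fin n, ∑ k : Fin n,
        (1 / (Nat.factorial 6 : ℝ)) * ∑ σ : Equiv.Perm (Fin 6),
          C (![i, i, j, j, k, k] (σ 0)) (![i, i, j, j, k, k] (σ 1))
            * C (![i, i, j, j, k, k] (σ 2)) (![i, i, j, j, k, k] (σ 3))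
            * (if ![i, i, j, j, k, k] (σ 4) = ![i, i, j, j, k, k] (σ 5)
               then (1 : ℝ) else 0))
      = (((n : ℝ) + 4) / 15) * (C.trace ^ 2 + 2 * (C * C).trace) := by
  refine (contraction_sym_CC_delta_general hC hC isSymm_one).trans ?_
  rw [mul_one, mul_one, trace_one, Fintype.card_fin]
  ring
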